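/- There exists an absolute constant C > 0 such that the following holds. Let f, g ∈ ℝ[x,y] be real bivariate polynomials of total degrees D ≥ 1 and E ≥ 1 respectively, with f nonzero, and suppose f and g have no common nonconstant factor. Then the set of connected components of Z(f) \ Z(g) ⊆ ℝ² is finite and has cardinality at most C · (D² + D·E). -/

import Mathlib

/-!
The zero set of a product is the union of the zero sets of its factors, and every component of
`Z(f) \ Z(g)` contains a component of `Z(h) \ Z(g)` for some irreducible factor `h` of `f`. As
`∑ (dᵢ² + dᵢ E) ≤ D² + D E` when `∑ dᵢ = D`, it is enough to treat an irreducible `f` of degree `d`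
(`card_le_of_irreducible`). Common factors of `f` and `g` are harmless, since they contribute
nothing to `Z(f) \ Z(g)`.

For irreducible `f`, a component `K` of `Z(f) \ Z(g)` is of one of three kinds.

* `K` is unbounded. Then `K` meets the circle `x² + y² = R` for all large `R`.
* `g` is not bounded away from zero on `K`. Then `K` meets `g² = ε` for all small `ε > 0`.
* Otherwise `K` is compact, so each coordinate attains a maximum on `K`. At a maximum of one
  coordinate the partial derivative of `f` in the other direction vanishes, because the implicit
  curve through that point would otherwise leave `K` (`exists_critical_point`).

For finitely many components `R` and `ε` can be chosen uniformly, so each kind of component injects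
into the common zeros of `f` and a polynomial of degree at most `2`, `2E`, `d - 1` respectively.
That polynomial is not divisible by `f`: of two different level sets `h = a` and `h = b`, at most one
has an equation divisible by `f`, and some partial derivative of `f` is nonzero of smaller degree.
Bézout's bound (`card_common_zeros_le`), proved by counting dimensions of spaces of polynomials of
bounded degree, gives at most `2d + 2dE + d(d - 1) ≤ 3 (d² + d E)` components.
-/

/-! ### Bézout's bound -/

lemma two_mul_finrank_restrictTotalDegree (m : ℕ) :
    2 * Module.finrank ℝ (MvPolynomial.restrictTotalDegree (Fin 2) ℝ m) = (m + 1) * (m + 2) := by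
  classical
  have h1 : Module.finrank ℝ (MvPolynomial.restrictTotalDegree (Fin 2) ℝ m)
      = Nat.card {n : Fin 2 →₀ ℕ | (n.sum fun _ e => e) ≤ m} :=
    Module.finrank_eq_nat_card_basis (MvPolynomial.basisRestrictSupport ℝ _)
  have h2 : {n : Fin 2 →₀ ℕ | (n.sum fun _ e => e) ≤ m} =
      ↑((Finset.range (m + 1)).biUnion
        fun k => (Finset.univ : Finset (Fin 2)).finsuppAntidiag k) := by
    ext n
    simp [Finsupp.sum_fintype]
  rw [h1, h2, Nat.card_coe_set_eq, Set.ncard_coe_finset, Finset.card_biUnion]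
  · simp only [Finset.card_finsuppAntidiag_nat_eq_choose, Finset.card_univ, Fintype.card_fin]
    induction m with
    | zero => simp
    | succ m ih =>
      have := ih (Module.finrank_eq_nat_card_basis (MvPolynomial.basisRestrictSupport ℝ _)) (by
        ext n
        simp [Finsupp.sum_fintype])
      rw [Finset.sum_range_succ, mul_add, this]
      have : 2 + (m + 1) - 1 = (m + 1) + 1 := by omega
      rw [this, Nat.choose_succ_self_right]
      ring
  · intro a _ b _ hab
    rw [Function.onFun, Finset.disjoint_left]
    intro n hn hn'
    simp only [Finset.mem_finsuppAntidiag] at hn hn'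
    exact hab (hn.1.symm.trans hn'.1)

/-- An interpolation polynomial at `p`: the product over the other points `q ∈ P` of the squared
distance to `q`. -/
lemma exists_lagrange (P : Finset (EuclideanSpace ℝ (Fin 2))) (p : EuclideanSpace ℝ (Fin 2)) :
    ∃ l : MvPolynomial (Fin 2) ℝ, MvPolynomial.eval (fun i => p i) l ≠ 0 ∧
      ∀ q ∈ P, q ≠ p → MvPolynomial.eval (fun i => q i) l = 0 := by
  classical
  refine ⟨∏ q ∈ P.erase p, ∑ i, (MvPolynomial.X i - MvPolynomial.C (q i)) ^ 2, ?_, ?_⟩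
  · rw [map_prod, Finset.prod_ne_zero_iff]
    intro q hq h0
    apply (Finset.mem_erase.1 hq).1
    simp only [map_sum, map_pow, map_sub, MvPolynomial.eval_X, MvPolynomial.eval_C] at h0
    rw [Finset.sum_eq_zero_iff_of_nonneg (fun i _ => sq_nonneg _)] at h0
    ext i
    have := pow_eq_zero_iff (two_ne_zero) |>.1 (h0 i (Finset.mem_univ i))
    linarith
  · intro q hq hqp
    rw [map_prod]
    exact Finset.prod_eq_zero (Finset.mem_erase.2 ⟨hqp, hq⟩) (by simp)

/-- **Bézout's bound** for the number of distinct real common zeros of two plane curves, one of them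
irreducible. Write `V m` for the polynomials of total degree at most `m`. Once `k` is large enough for
interpolation at `P`, evaluation at `P` maps `V (k + d + e)` onto a space of dimension `#P`, and its
kernel contains `f V (k + e) + h V (k + d)`. The syzygies of `f` and `h` embed into `V k`, so the
quotient has dimension at most
`dim V (k + d + e) - dim V (k + e) - dim V (k + d) + dim V k = d * e`. -/
lemma card_common_zeros_le {f h : MvPolynomial (Fin 2) ℝ} (hf : Irreducible f) (hfh : ¬ f ∣ h)
    {d e : ℕ} (hd : f.totalDegree ≤ d) (he : h.totalDegree ≤ e)
    (P : Finset (EuclideanSpace ℝ (Fin 2)))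
    (hPf : ∀ p ∈ P, MvPolynomial.eval (fun i => p i) f = 0)
    (hPh : ∀ p ∈ P, MvPolynomial.eval (fun i => p i) h = 0) : P.card ≤ d * e := by
  classical
  have hh0 : h ≠ 0 := by rintro rfl; exact hfh (dvd_zero f)
  suffices H : P.card ≤ f.totalDegree * h.totalDegree from H.trans (Nat.mul_le_mul hd he)
  clear hd he d e
  generalize hd : f.totalDegree = d
  generalize he : h.totalDegree = e
  choose l hl hl' using exists_lagrange P
  obtain ⟨k, hk⟩ : ∃ k, ∀ p ∈ P, (l p).totalDegree ≤ k :=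
    ⟨P.sup fun p => (l p).totalDegree, fun p hp => Finset.le_sup (f := fun p => (l p).totalDegree) hp⟩
  let V := fun m => MvPolynomial.restrictTotalDegree (Fin 2) ℝ m
  let ev : V (k + d + e) →ₗ[ℝ] (P → ℝ) :=
    (LinearMap.pi fun p : P =>
      (MvPolynomial.aeval (R := ℝ) (fun i => (p : EuclideanSpace ℝ (Fin 2)) i)).toLinearMap) ∘ₗ
      (V (k + d + e)).subtype
  have hev : ∀ u p, ev u p = MvPolynomial.eval (fun i => (p : EuclideanSpace ℝ (Fin 2)) i) u.1 := by
    intro u p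
    simp [ev, MvPolynomial.aeval_eq_eval]
  have hsurj : Function.Surjective ev := by
    intro w
    refine ⟨⟨∑ p : P, MvPolynomial.C (w p / MvPolynomial.eval (fun i => p.1 i) (l p)) * l p, ?_⟩, ?_⟩
    · refine Submodule.sum_mem _ fun p _ => ?_
      rw [← MvPolynomial.smul_eq_C_mul]
      refine Submodule.smul_mem _ _ ?_
      rw [MvPolynomial.mem_restrictTotalDegree]
      have := hk p p.2
      omega
    · ext q
      rw [hev]
      simp only [map_sum, map_mul, MvPolynomial.eval_C]
      rw [Finset.sum_eq_single q]
      · exact div_mul_cancel₀ _ (hl q)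
      · intro p _ hpq
        rw [hl' p q q.2 (fun h => hpq (Subtype.ext h.symm)), mul_zero]
      · simp
  -- the map `(a, b) ↦ f * a + h * b`
  let φ : V (k + e) × V (k + d) →ₗ[ℝ] V (k + d + e) := LinearMap.codRestrict _
    ((LinearMap.mulLeft ℝ f ∘ₗ (V (k + e)).subtype).coprod
      (LinearMap.mulLeft ℝ h ∘ₗ (V (k + d)).subtype)) (by
    rintro ⟨⟨a, ha⟩, ⟨b, hb⟩⟩
    simp only [V, MvPolynomial.mem_restrictTotalDegree] at ha hb
    simp only [V, LinearMap.coprod_apply, LinearMap.comp_apply, Submodule.subtype_apply,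
      LinearMap.mulLeft_apply]
    refine Submodule.add_mem _ ?_ ?_ <;> rw [MvPolynomial.mem_restrictTotalDegree]
    · exact (MvPolynomial.totalDegree_mul _ _).trans (by omega)
    · exact (MvPolynomial.totalDegree_mul _ _).trans (by omega))
  have hφ : ∀ x, (φ x).1 = f * x.1.1 + h * x.2.1 := fun x => rfl
  have hker : Module.finrank ℝ (LinearMap.ker φ) ≤ Module.finrank ℝ (V k) := by
    -- a syzygy `f * a + h * b = 0` has `b = f * c` and `a = -h * c`
    have key : ∀ x : LinearMap.ker φ, ∃ c : V k, x.1.2.1 = f * c.1 := by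
      rintro ⟨⟨⟨a, ha⟩, ⟨b, hb⟩⟩, hx⟩
      have hx' : f * a + h * b = 0 := by
        have := congrArg Subtype.val (LinearMap.mem_ker.1 hx)
        exact this
      have : f ∣ h * b := ⟨-a, by linear_combination hx'⟩
      obtain ⟨c, rfl⟩ := (hf.prime.dvd_or_dvd this).resolve_left hfh
      refine ⟨⟨c, ?_⟩, rfl⟩
      rw [MvPolynomial.mem_restrictTotalDegree]
      by_cases hc : c = 0
      · simp [hc]
      · have h1 := MvPolynomial.totalDegree_mul_of_isDomain hf.ne_zero hc
        have h2 := (MvPolynomial.mem_restrictTotalDegree _ _ _).1 hb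
        omega
    choose c hc using key
    let ψ : LinearMap.ker φ →ₗ[ℝ] V k :=
      { toFun := c
        map_add' := fun x y => by
          apply Subtype.ext
          apply mul_left_cancel₀ hf.ne_zero
          rw [← hc]
          simp [mul_add, ← hc]
        map_smul' := fun r x => by
          apply Subtype.ext
          apply mul_left_cancel₀ hf.ne_zero
          rw [← hc]
          simp [← hc] }
    refine LinearMap.finrank_le_finrank_of_injective (f := ψ) ?_
    intro x y hxy
    have hb : x.1.2.1 = y.1.2.1 := by rw [hc x, hc y, show c x = c y from hxy]
    have hx : f * x.1.1.1 + h * x.1.2.1 = 0 := by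
      rw [← hφ, LinearMap.mem_ker.1 x.2]; rfl
    have hy : f * y.1.1.1 + h * y.1.2.1 = 0 := by
      rw [← hφ, LinearMap.mem_ker.1 y.2]; rfl
    have ha : x.1.1.1 = y.1.1.1 := by
      apply mul_left_cancel₀ hf.ne_zero
      linear_combination hx - hy - h * hb
    exact Subtype.ext (Prod.ext (Subtype.ext ha) (Subtype.ext hb))
  have hrange : LinearMap.range φ ≤ LinearMap.ker ev := by
    rintro _ ⟨x, rfl⟩
    rw [LinearMap.mem_ker]
    ext p
    rw [hev, hφ]
    simp [hPf p p.2, hPh p p.2]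
  have r1 := LinearMap.finrank_range_add_finrank_ker φ
  have r2 := LinearMap.finrank_range_add_finrank_ker ev
  rw [LinearMap.range_eq_top.2 hsurj, finrank_top, Module.finrank_fintype_fun_eq_card,
    Fintype.card_coe] at r2
  have r3 := Submodule.finrank_mono hrange
  rw [Module.finrank_prod] at r1
  have t1 := two_mul_finrank_restrictTotalDegree (k + d + e)
  have t2 := two_mul_finrank_restrictTotalDegree (k + e)
  have t3 := two_mul_finrank_restrictTotalDegree (k + d)
  have t4 := two_mul_finrank_restrictTotalDegree k
  simp only [V] at *
  have : (k + d + e + 1) * (k + d + e + 2) + (k + 1) * (k + 2)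
    = (k + e + 1) * (k + e + 2) + (k + d + 1) * (k + d + 2) + 2 * (d * e) := by ring
  omega

/-! ### Polynomials and their partial derivatives -/

lemma continuous_eval_euclidean (f : MvPolynomial (Fin 2) ℝ) :
    Continuous fun p : EuclideanSpace ℝ (Fin 2) => MvPolynomial.eval (fun i => p i) f :=
  (MvPolynomial.continuous_eval f).comp (by fun_prop)

lemma totalDegree_pos_of_irreducible {f : MvPolynomial (Fin 2) ℝ} (hf : Irreducible f) :
    0 < f.totalDegree := by
  rw [Nat.pos_iff_ne_zero, Ne, MvPolynomial.totalDegree_eq_zero_iff_eq_C]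
  intro h
  apply hf.not_isUnit
  rw [h]
  refine IsUnit.map _ (isUnit_iff_ne_zero.2 fun h0 => hf.ne_zero ?_)
  rw [h, h0, map_zero]

lemma totalDegree_pderiv_lt {f : MvPolynomial (Fin 2) ℝ} (hf : 0 < f.totalDegree) (i : Fin 2) :
    (MvPolynomial.pderiv i f).totalDegree < f.totalDegree := by
  rw [MvPolynomial.totalDegree, Finset.sup_lt_iff (by exact hf)]
  intro m hm
  rw [MvPolynomial.mem_support_iff, MvPolynomial.coeff_pderiv] at hm
  have := MvPolynomial.le_totalDegree (MvPolynomial.mem_support_iff.2 (left_ne_zero_of_mul hm))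
  rw [Finsupp.sum_add_index' (by simp) (by simp), Finsupp.sum_single_index rfl] at this
  exact this

lemma exists_pderiv_ne_zero {f : MvPolynomial (Fin 2) ℝ} (hf : 0 < f.totalDegree) :
    ∃ i, MvPolynomial.pderiv i f ≠ 0 := by
  by_contra! h
  apply hf.ne'
  rw [MvPolynomial.totalDegree_eq_zero_iff_eq_C]
  ext m
  rw [MvPolynomial.coeff_C]
  split_ifs with hm
  · rw [hm]
  · obtain ⟨i, hi⟩ := Finsupp.ne_iff.1 (Ne.symm hm)
    have := MvPolynomial.coeff_pderiv f (m - Finsupp.single i 1) (i := i)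
    rw [h i, MvPolynomial.coeff_zero, tsub_add_cancel_of_le] at this
    · exact (mul_eq_zero.1 this.symm).resolve_right (by positivity)
    · rw [Finsupp.single_le_iff]
      exact Nat.one_le_iff_ne_zero.2 hi

lemma exists_pderiv_not_dvd {f : MvPolynomial (Fin 2) ℝ} (hf : Irreducible f) :
    ∃ i, ¬ f ∣ MvPolynomial.pderiv i f := by
  have h0 := totalDegree_pos_of_irreducible hf
  obtain ⟨i, hi⟩ := exists_pderiv_ne_zero h0
  refine ⟨i, fun ⟨c, hc⟩ => ?_⟩
  have hc0 : c ≠ 0 := by rintro rfl; simp [hi] at hc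
  have h1 := MvPolynomial.totalDegree_mul_of_isDomain hf.ne_zero hc0
  have h2 := totalDegree_pderiv_lt h0 i
  rw [← hc] at h1
  omega

lemma hasStrictFDerivAt_eval (f : MvPolynomial (Fin 2) ℝ) (p : EuclideanSpace ℝ (Fin 2)) :
    HasStrictFDerivAt
      (fun q : EuclideanSpace ℝ (Fin 2) => MvPolynomial.eval (fun i => q i) f)
      (∑ i, MvPolynomial.eval (fun i => p i) (MvPolynomial.pderiv i f) •
        (EuclideanSpace.proj i : EuclideanSpace ℝ (Fin 2) →L[ℝ] ℝ)) p := by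
  induction f using MvPolynomial.induction_on with
  | C a =>
    simp only [MvPolynomial.eval_C, MvPolynomial.pderiv_C, map_zero, zero_smul,
      Finset.sum_const_zero]
    exact hasStrictFDerivAt_const _ _
  | add a b ha hb =>
    simp only [map_add, add_smul, Finset.sum_add_distrib]
    exact ha.add hb
  | mul_X a j ha =>
    have hj : HasStrictFDerivAt (fun q : EuclideanSpace ℝ (Fin 2) => q j)
      (EuclideanSpace.proj j : EuclideanSpace ℝ (Fin 2) →L[ℝ] ℝ) p :=
      (EuclideanSpace.proj j : EuclideanSpace ℝ (Fin 2) →L[ℝ] ℝ).hasStrictFDerivAt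
    simp only [map_mul, MvPolynomial.eval_X]
    refine (ha.mul hj).congr_fderiv ?_
    ext v
    simp only [Derivation.leibniz, MvPolynomial.pderiv_X, add_apply,
      smul_apply, smul_eq_mul, map_add,
      map_mul, MvPolynomial.eval_X, Fin.sum_univ_two, PiLp.proj_apply]
    fin_cases j <;> simp <;> ring

/-! ### Leaving a point along the implicit curve -/

/-- The curve `Z(f)` with the points of `Z(g)` removed. -/
def curveDiff (f g : MvPolynomial (Fin 2) ℝ) : Set (EuclideanSpace ℝ (Fin 2)) :=
  {p | MvPolynomial.eval (fun i => p i) f = 0 ∧ MvPolynomial.eval (fun i => p i) g ≠ 0}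

/-- Where `∂f/∂xᵢ ≠ 0`, the curve `Z(f)` is locally a graph over the other coordinate `xⱼ`, so `xⱼ`
has no maximum there on the component. The graph comes from the inverse function theorem for
`q ↦ (f q, q j)`. -/
lemma exists_curve {f g : MvPolynomial (Fin 2) ℝ} {p : EuclideanSpace ℝ (Fin 2)}
    (hp : p ∈ curveDiff f g) {i j : Fin 2} (hij : j ≠ i)
    (hi : MvPolynomial.eval (fun i => p i) (MvPolynomial.pderiv i f) ≠ 0) :
    ∃ q ∈ connectedComponentIn (curveDiff f g) p, p j < q j := by
  let A : EuclideanSpace ℝ (Fin 2) →L[ℝ] ℝ × ℝ :=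
    (∑ i, MvPolynomial.eval (fun i => p i) (MvPolynomial.pderiv i f) •
        (EuclideanSpace.proj i : EuclideanSpace ℝ (Fin 2) →L[ℝ] ℝ)).prod (EuclideanSpace.proj j)
  have hA : Function.Injective A.toLinearMap := by
    refine (injective_iff_map_eq_zero A.toLinearMap).2 fun v hv => ?_
    have h2 : v j = 0 := congrArg Prod.snd hv
    have h1 : ∑ i, MvPolynomial.eval (fun i => p i) (MvPolynomial.pderiv i f) * v i = 0 := by
      have := congrArg Prod.fst hv
      simpa [A] using this
    have h3 : v i = 0 := by
      rw [Finset.sum_eq_single i] at h1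
      · exact (mul_eq_zero.1 h1).resolve_left hi
      · intro b _ hb
        have : b = j := by omega
        rw [this, h2, mul_zero]
      · simp
    ext b
    by_cases hb : b = i
    · rw [hb, h3]; rfl
    · have : b = j := by omega
      rw [this, h2]; rfl
  let A' : EuclideanSpace ℝ (Fin 2) ≃L[ℝ] ℝ × ℝ :=
    (LinearEquiv.ofInjectiveOfFinrankEq A.toLinearMap hA (by simp)).toContinuousLinearEquiv
  let F : EuclideanSpace ℝ (Fin 2) → ℝ × ℝ := fun q => (MvPolynomial.eval (fun i => q i) f, q j)
  have hF : HasStrictFDerivAt F (A' : EuclideanSpace ℝ (Fin 2) →L[ℝ] ℝ × ℝ) p := by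
    refine ((hasStrictFDerivAt_eval f p).prodMk
      (EuclideanSpace.proj j : EuclideanSpace ℝ (Fin 2) →L[ℝ] ℝ).hasStrictFDerivAt).congr_fderiv ?_
    ext v <;> rfl
  let Φ := hF.toOpenPartialHomeomorph F
  have hΦ : ∀ q, Φ q = F q := fun q => rfl
  have hps : p ∈ Φ.source := hF.mem_toOpenPartialHomeomorph_source
  -- the level set is parametrised near `p` by its `j`-th coordinate
  let γ : ℝ → EuclideanSpace ℝ (Fin 2) := fun t => Φ.symm (0, t)
  have hFp : F p = (0, p j) := Prod.ext hp.1 rfl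
  have hγp : γ (p j) = p := by
    have := Φ.left_inv hps
    rwa [hΦ, hFp] at this
  let U := Φ.symm.source ∩ Φ.symm ⁻¹' {q | MvPolynomial.eval (fun i => q i) g ≠ 0}
  have hU : IsOpen U := Φ.symm.isOpen_inter_preimage
    (isOpen_ne_fun (continuous_eval_euclidean g) continuous_const)
  have hpU : ((0 : ℝ), p j) ∈ U := by
    refine ⟨?_, ?_⟩
    · have := Φ.map_source hps
      rwa [hΦ, hFp] at this
    · show MvPolynomial.eval (fun i => γ (p j) i) g ≠ 0
      rw [hγp]; exact hp.2
  have hT : IsOpen ((fun t : ℝ => ((0 : ℝ), t)) ⁻¹' U) := hU.preimage (by fun_prop)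
  obtain ⟨ε, hε, hball⟩ := Metric.isOpen_iff.1 hT (p j) hpU
  have hI : ∀ t ∈ Set.Icc (p j) (p j + ε / 2), ((0 : ℝ), t) ∈ U := by
    intro t ht
    apply hball
    rw [Metric.mem_ball, Real.dist_eq, abs_of_nonneg (by linarith [ht.1])]
    linarith [ht.2]
  have hFγ : ∀ t ∈ Set.Icc (p j) (p j + ε / 2), F (γ t) = (0, t) := fun t ht =>
    Φ.right_inv (hI t ht).1
  have hcont : ContinuousOn γ (Set.Icc (p j) (p j + ε / 2)) :=
    Φ.symm.continuousOn.comp (by fun_prop) fun t ht => (hI t ht).1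
  have hpre : IsPreconnected (γ '' Set.Icc (p j) (p j + ε / 2)) := isPreconnected_Icc.image _ hcont
  have hsub : γ '' Set.Icc (p j) (p j + ε / 2) ⊆ curveDiff f g := by
    rintro _ ⟨t, ht, rfl⟩
    exact ⟨congrArg Prod.fst (hFγ t ht), (hI t ht).2⟩
  have hmem : p j + ε / 2 ∈ Set.Icc (p j) (p j + ε / 2) := ⟨by linarith, le_refl _⟩
  refine ⟨γ (p j + ε / 2), hpre.subset_connectedComponentIn
    ⟨p j, ⟨le_refl _, by linarith⟩, hγp⟩ hsub ⟨_, hmem, rfl⟩, ?_⟩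
  have : γ (p j + ε / 2) j = p j + ε / 2 := congrArg Prod.snd (hFγ _ hmem)
  rw [this]; linarith

/-! ### Counting separated points -/

/-- The points of `S` are points of `Z(f) \ Z(g)` and lie in pairwise distinct connected components
of it. -/
def Separated (f g : MvPolynomial (Fin 2) ℝ) (S : Finset (EuclideanSpace ℝ (Fin 2))) : Prop :=
  ∀ p ∈ S, p ∈ curveDiff f g ∧ ∀ q ∈ S, q ∈ connectedComponentIn (curveDiff f g) p → q = p

lemma Separated.mono {f g : MvPolynomial (Fin 2) ℝ} {S T : Finset (EuclideanSpace ℝ (Fin 2))}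
    (h : Separated f g S) (hT : T ⊆ S) : Separated f g T := fun p hp =>
  ⟨(h p (hT hp)).1, fun q hq => (h p (hT hp)).2 q (hT hq)⟩

/-- If every component through a point of `S` contains a zero of a polynomial `h`
not divisible by `f`, then these zeros are distinct and Bézout's bound applies. -/
lemma Separated.card_le {f g h : MvPolynomial (Fin 2) ℝ} {S : Finset (EuclideanSpace ℝ (Fin 2))}
    (hS : Separated f g S) (hf : Irreducible f) (hfh : ¬ f ∣ h) {d e : ℕ}
    (hd : f.totalDegree ≤ d) (he : h.totalDegree ≤ e)
    (H : ∀ p ∈ S, ∃ q ∈ connectedComponentIn (curveDiff f g) p,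
      MvPolynomial.eval (fun i => q i) h = 0) : S.card ≤ d * e := by
  classical
  choose! q hq hq0 using H
  rw [← Finset.card_image_of_injOn (f := q) (s := S)]
  · refine card_common_zeros_le hf hfh hd he _ ?_ ?_
    · rw [Finset.forall_mem_image]
      exact fun p hp => (connectedComponentIn_subset _ _ (hq p hp)).1
    · rw [Finset.forall_mem_image]
      exact hq0
  · intro a ha b hb hab
    have h1 := connectedComponentIn_eq (hq a ha)
    have h2 := connectedComponentIn_eq (hq b hb)
    have h3 : a ∈ connectedComponentIn (curveDiff f g) b := by
      rw [h2, ← hab, ← h1]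
      exact mem_connectedComponentIn (hS a ha).1
    exact (hS b hb).2 a ha h3

/-- If every component through a point of `S` meets both level sets `h = a` and `h = b`, then `S` has
at most `d * e` points: an irreducible `f` cannot divide both `h - a` and `h - b`. -/
lemma Separated.card_le_of_levels {f g h : MvPolynomial (Fin 2) ℝ}
    {S : Finset (EuclideanSpace ℝ (Fin 2))}
    (hS : Separated f g S) (hf : Irreducible f) {d e : ℕ}
    (hd : f.totalDegree ≤ d) (he : h.totalDegree ≤ e) {a b : ℝ} (hab : a ≠ b)
    (H : ∀ c, c = a ∨ c = b → ∀ p ∈ S, ∃ q ∈ connectedComponentIn (curveDiff f g) p,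
      MvPolynomial.eval (fun i => q i) h = c) : S.card ≤ d * e := by
  obtain ⟨c, hc, hfc⟩ : ∃ c, (c = a ∨ c = b) ∧ ¬ f ∣ h - MvPolynomial.C c := by
    by_contra! hcon
    have h1 := dvd_sub (hcon a (Or.inl rfl)) (hcon b (Or.inr rfl))
    rw [sub_sub_sub_cancel_left, ← map_sub] at h1
    refine hf.not_isUnit (isUnit_of_dvd_unit h1 (IsUnit.map _ ?_))
    exact isUnit_iff_ne_zero.2 (sub_ne_zero.2 hab.symm)
  refine hS.card_le hf hfc hd (e := e) ?_ fun p hp => ?_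
  · exact (MvPolynomial.totalDegree_sub_C_le _ _).trans he
  · obtain ⟨q, hq, hqc⟩ := H c hc p hp
    exact ⟨q, hq, by simp [hqc]⟩

/-- A bounded component on which `g` is bounded away from zero is compact and contains a zero of
`∂f/∂xᵢ`, namely a point where the other coordinate is maximal. -/
lemma exists_critical_point {f g : MvPolynomial (Fin 2) ℝ} {p : EuclideanSpace ℝ (Fin 2)}
    (hp : p ∈ curveDiff f g) (i : Fin 2) {M δ : ℝ} (hδ : 0 < δ)
    (hM : ∀ q ∈ connectedComponentIn (curveDiff f g) p, ‖q‖ ^ 2 ≤ M)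
    (hg : ∀ q ∈ connectedComponentIn (curveDiff f g) p,
      δ ≤ MvPolynomial.eval (fun i => q i) g ^ 2) :
    ∃ q ∈ connectedComponentIn (curveDiff f g) p,
      MvPolynomial.eval (fun i => q i) (MvPolynomial.pderiv i f) = 0 := by
  set K := connectedComponentIn (curveDiff f g) p with hK
  have hpK : p ∈ K := mem_connectedComponentIn hp
  have hclosed : IsClosed K := by
    have h1 : closure K ⊆ curveDiff f g := by
      have hc : IsClosed {q : EuclideanSpace ℝ (Fin 2) | MvPolynomial.eval (fun i => q i) f = 0 ∧
          δ ≤ MvPolynomial.eval (fun i => q i) g ^ 2} :=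
        (isClosed_eq (continuous_eval_euclidean f) continuous_const).inter
          (isClosed_le continuous_const ((continuous_eval_euclidean g).pow 2))
      intro q hq
      obtain ⟨hq1, hq2⟩ := closure_minimal
        (fun r hr => And.intro (connectedComponentIn_subset _ _ hr).1 (hg r hr)) hc hq
      refine ⟨hq1, fun h0 => ?_⟩
      rw [h0] at hq2
      norm_num at hq2
      linarith
    exact isClosed_of_closure_subset (isPreconnected_connectedComponentIn.closure
      |>.subset_connectedComponentIn (subset_closure hpK) h1)
  have hbdd : Bornology.IsBounded K := by
    refine (Metric.isBounded_closedBall (x := 0) (r := √M)).subset fun q hq => ?_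
    rw [mem_closedBall_zero_iff]
    exact Real.le_sqrt_of_sq_le (hM q hq)
  have hcomp : IsCompact K := Metric.isCompact_of_isClosed_isBounded hclosed hbdd
  obtain ⟨j, hij⟩ : ∃ j : Fin 2, j ≠ i := exists_ne i
  have hj : Continuous fun q : EuclideanSpace ℝ (Fin 2) => q j := by fun_prop
  obtain ⟨q, hq, hmax⟩ := hcomp.exists_isMaxOn ⟨p, hpK⟩ hj.continuousOn
  refine ⟨q, hq, ?_⟩
  by_contra hne
  obtain ⟨r, hr, hlt⟩ := exists_curve (connectedComponentIn_subset _ _ hq) hij hne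
  rw [← connectedComponentIn_eq hq] at hr
  exact absurd (hmax hr) (not_le.2 hlt)

lemma card_le_of_irreducible {f g : MvPolynomial (Fin 2) ℝ} (hf : Irreducible f)
    {S : Finset (EuclideanSpace ℝ (Fin 2))} (hS : Separated f g S) :
    S.card ≤ 3 * (f.totalDegree ^ 2 + f.totalDegree * g.totalDegree) := by
  classical
  set d := f.totalDegree with hd
  set e := g.totalDegree with he
  have hd0 : 0 < d := totalDegree_pos_of_irreducible hf
  let K := fun p => connectedComponentIn (curveDiff f g) p
  have hpK : ∀ p ∈ S, p ∈ K p := fun p hp => mem_connectedComponentIn (hS p hp).1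
  let N : MvPolynomial (Fin 2) ℝ := ∑ i, MvPolynomial.X i ^ 2
  have hN : ∀ q : EuclideanSpace ℝ (Fin 2), MvPolynomial.eval (fun i => q i) N = ‖q‖ ^ 2 := by
    intro q
    simp [N, EuclideanSpace.norm_sq_eq]
  have hNd : N.totalDegree ≤ 2 :=
    MvPolynomial.totalDegree_finsetSum_le fun i _ => (MvPolynomial.totalDegree_X_pow i 2).le
  -- `unb`: the component is unbounded; `acc`: `g` takes arbitrarily small values on it
  let unb := fun p => ∀ M : ℝ, ∃ q ∈ K p, M < ‖q‖ ^ 2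
  let acc := fun p => ∀ δ : ℝ, 0 < δ → ∃ q ∈ K p, MvPolynomial.eval (fun i => q i) g ^ 2 < δ
  have c1 : (S.filter unb).card ≤ d * 2 := by
    obtain ⟨R, hR⟩ := (S.image fun p => ‖p‖ ^ 2).exists_le
    refine (hS.mono (Finset.filter_subset _ _)).card_le_of_levels hf (h := N) hd.ge hNd
      (a := R) (b := R + 1) (by linarith) fun c hc p hp => ?_
    rw [Finset.mem_filter] at hp
    obtain ⟨q, hq, hqc⟩ := hp.2 c
    have hRp := hR _ (Finset.mem_image_of_mem _ hp.1)
    refine isPreconnected_connectedComponentIn.intermediate_value (hpK p hp.1) hq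
      (continuous_eval_euclidean N).continuousOn ⟨?_, ?_⟩
    · rw [hN]; rcases hc with rfl | rfl <;> linarith
    · rw [hN]; exact hqc.le
  have c2 : (S.filter acc).card ≤ d * (2 * e) := by
    obtain ⟨ε, hεS, hε⟩ : ∃ ε : ℝ, (∀ p ∈ S, ε < MvPolynomial.eval (fun i => p i) g ^ 2) ∧ 0 < ε := by
      refine (Filter.Eventually.and ?_ self_mem_nhdsWithin : ∀ᶠ ε in nhdsWithin (0 : ℝ) (Set.Ioi 0),
        (∀ p ∈ S, ε < MvPolynomial.eval (fun i => p i) g ^ 2) ∧ ε ∈ Set.Ioi 0).exists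
      rw [Filter.eventually_all_finset]
      intro p hp
      have : 0 < MvPolynomial.eval (fun i => p i) g ^ 2 :=
        sq_pos_of_ne_zero (hS p hp).1.2
      exact nhdsWithin_le_nhds (Iio_mem_nhds this)
    refine (hS.mono (Finset.filter_subset _ _)).card_le_of_levels hf (h := g ^ 2) hd.ge
      (MvPolynomial.totalDegree_pow _ _) (a := ε) (b := ε / 2) (by linarith) fun c hc p hp => ?_
    rw [Finset.mem_filter] at hp
    obtain ⟨q, hq, hqc⟩ := hp.2 c (by rcases hc with rfl | rfl <;> linarith)
    have hp' := hεS p hp.1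
    refine isPreconnected_connectedComponentIn.intermediate_value hq (hpK p hp.1)
      (continuous_eval_euclidean (g ^ 2)).continuousOn ⟨?_, ?_⟩
    · rw [map_pow]; exact hqc.le
    · rw [map_pow]; rcases hc with rfl | rfl <;> linarith
  have c3 : (S.filter fun p => ¬ unb p ∧ ¬ acc p).card ≤ d * (d - 1) := by
    obtain ⟨i, hi⟩ := exists_pderiv_not_dvd hf
    refine (hS.mono (Finset.filter_subset _ _)).card_le hf hi hd.ge
      (Nat.le_sub_one_of_lt (totalDegree_pderiv_lt hd0 i)) fun p hp => ?_
    simp only [Finset.mem_filter, unb, acc] at hp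
    obtain ⟨hpS, h1, h2⟩ := hp
    push Not at h1 h2
    obtain ⟨M, hM⟩ := h1
    obtain ⟨δ, hδ, hg⟩ := h2
    exact exists_critical_point (hS p hpS).1 i hδ hM hg
  have hcover : S ⊆ (S.filter unb ∪ S.filter acc) ∪ S.filter fun p => ¬ unb p ∧ ¬ acc p := by
    intro p hp
    simp only [Finset.mem_union, Finset.mem_filter]
    tauto
  have := (Finset.card_le_card hcover).trans (Finset.card_union_le _ _)
  have := Finset.card_union_le (S.filter unb) (S.filter acc)
  obtain ⟨k, hk⟩ : ∃ k, d = k + 1 := ⟨d - 1, by omega⟩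
  rw [hk] at c1 c2 c3 ⊢
  rw [Nat.add_sub_cancel] at c3
  nlinarith

/-- Passage from irreducible polynomials to arbitrary ones: a separated set for `i * a` splits into
a separated set for `i` and one for `a`, and `d² + d E` is superadditive in `d`. -/
lemma card_le_of_separated (f g : MvPolynomial (Fin 2) ℝ) (hf0 : f ≠ 0)
    (S : Finset (EuclideanSpace ℝ (Fin 2))) (hS : Separated f g S) :
    S.card ≤ 3 * (f.totalDegree ^ 2 + f.totalDegree * g.totalDegree) := by
  classical
  induction f using WfDvdMonoid.induction_on_irreducible generalizing S with
  | zero => exact absurd rfl hf0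
  | unit u hu =>
    have : S = ∅ := by
      refine Finset.eq_empty_of_forall_notMem fun p hp => ?_
      exact (hu.map (MvPolynomial.eval fun i => p i)).ne_zero (hS p hp).1.1
    simp [this]
  | mul a i ha hi ih =>
    -- any subset of `S` lying on a factor is separated for this factor
    have key : ∀ (b : MvPolynomial (Fin 2) ℝ), b ∣ i * a → ∀ T ⊆ S,
        (∀ p ∈ T, MvPolynomial.eval (fun i => p i) b = 0) → Separated b g T := by
      rintro b ⟨c, hc⟩ T hT hb p hp
      have hsub : curveDiff b g ⊆ curveDiff (i * a) g := fun q hq =>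
        ⟨by rw [hc, map_mul, hq.1, zero_mul], hq.2⟩
      refine ⟨⟨hb p hp, (hS p (hT hp)).1.2⟩, fun q hq hqp => ?_⟩
      exact (hS p (hT hp)).2 q (hT hq) (connectedComponentIn_mono p hsub hqp)
    have h1 := card_le_of_irreducible hi (key i (dvd_mul_right i a)
      (S.filter fun p => MvPolynomial.eval (fun i => p i) i = 0) (Finset.filter_subset _ _)
      (fun p hp => (Finset.mem_filter.1 hp).2))
    have h2 := ih ha _ (key a (dvd_mul_left a i)
      (S.filter fun p => ¬ MvPolynomial.eval (fun i => p i) i = 0) (Finset.filter_subset _ _)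
      (fun p hp => by
        have := (hS p (Finset.mem_filter.1 hp).1).1.1
        rw [map_mul] at this
        exact (mul_eq_zero.1 this).resolve_left (Finset.mem_filter.1 hp).2))
    rw [← Finset.card_filter_add_card_filter_not
      (s := S) (fun p => MvPolynomial.eval (fun i => p i) i = 0),
      MvPolynomial.totalDegree_mul_of_isDomain hi.ne_zero ha]
    nlinarith [Nat.zero_le (i.totalDegree * a.totalDegree)]

lemma card_components_le (f g : MvPolynomial (Fin 2) ℝ) (hf0 : f ≠ 0)
    (T : Finset (ConnectedComponents ↥(curveDiff f g))) :
    T.card ≤ 3 * (f.totalDegree ^ 2 + f.totalDegree * g.totalDegree) := by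
  classical
  -- one representative point per component
  let r : ConnectedComponents ↥(curveDiff f g) → ↥(curveDiff f g) := Quotient.out
  have hr : ∀ c, ConnectedComponents.mk (r c) = c := fun c => Quotient.out_eq c
  have hinj : Function.Injective fun c => (r c : EuclideanSpace ℝ (Fin 2)) := fun a b hab => by
    rw [← hr a, ← hr b, Subtype.ext hab]
  rw [← Finset.card_image_of_injective T hinj]
  refine card_le_of_separated f g hf0 _ ?_
  unfold Separated
  simp only [Finset.forall_mem_image]
  refine fun a _ => ⟨(r a).2, fun b _ hb => ?_⟩
  rw [connectedComponentIn_eq_image (r a).2] at hb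
  obtain ⟨x, hx, hxb⟩ := hb
  rw [Subtype.ext hxb, ← ConnectedComponents.coe_eq_coe', hr, hr] at hx
  rw [hx]


theorem components_of_curve_minus_zero_set :
    ∃ C : ℝ, 0 < C ∧
      ∀ (f g : MvPolynomial (Fin 2) ℝ) (D E : ℕ),
        f.totalDegree = D → g.totalDegree = E → 1 ≤ D → 1 ≤ E → f ≠ 0 →
        (¬ ∃ h : MvPolynomial (Fin 2) ℝ, 0 < h.totalDegree ∧ h ∣ f ∧ h ∣ g) →
        Finite (ConnectedComponents
          ↥{p : EuclideanSpace ℝ (Fin 2) |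
              MvPolynomial.eval (fun i => p i) f = 0 ∧
              MvPolynomial.eval (fun i => p i) g ≠ 0}) ∧
        (Nat.card (ConnectedComponents
          ↥{p : EuclideanSpace ℝ (Fin 2) |
              MvPolynomial.eval (fun i => p i) f = 0 ∧
              MvPolynomial.eval (fun i => p i) g ≠ 0}) : ℝ)
          ≤ C * ((D : ℝ) ^ 2 + (D : ℝ) * (E : ℝ)) := by
  refine ⟨3, by norm_num, ?_⟩
  rintro f g D E rfl rfl - - hf0 -
  have hle := card_components_le f g hf0
  have hfin : Finite (ConnectedComponents ↥(curveDiff f g)) := by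
    by_contra hinf
    rw [not_finite_iff_infinite] at hinf
    obtain ⟨T, hT⟩ := Infinite.exists_subset_card_eq (ConnectedComponents ↥(curveDiff f g))
      (3 * (f.totalDegree ^ 2 + f.totalDegree * g.totalDegree) + 1)
    have := hle T
    omega
  refine ⟨hfin, ?_⟩
  have := Fintype.ofFinite (ConnectedComponents ↥(curveDiff f g))
  have h := hle Finset.univ
  rw [Finset.card_univ, ← Nat.card_eq_fintype_card] at h
  exact_mod_cast h
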